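/- Let 1 ≤ p < ∞ and let E = (⊕_{n=1}^∞ c_0)_{ℓ_p} be the ℓ_p-direct sum of countably many copies of c_0. For each k ≥ 1 let x_k ∈ E be the vector whose n-th block, for 1 ≤ n ≤ k, equals k^{-1/p}e_k, and whose other blocks are 0. Then ‖x_k‖_E = 1 for every k, and there exists a constant C ≥ 1 such that for every finitely supported real sequence (a_j)_{j≥1}: C^{-1}·(∑_{n=1}^∞ (max_{2^{n-1} ≤ j ≤ 2^n−1}|a_j|)^p)^{1/p} ≤ ‖∑_{k=1}^∞ a_k x_k‖_E ≤ C·(∑_{n=1}^∞ (max_{2^{n-1} ≤ j ≤ 2^n−1}|a_j|)^p)^{1/p}; that is, (x_k)_{k=1}^∞ is a normalized sequence equivalent to the canonical basis of (⊕_{n=1}^∞ ℓ_∞^{2^{n-1}})_{ℓ_p}. -/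

import Mathlib

/-- The element of `c_0` (real sequences vanishing at infinity, modelled as
`ZeroAtInftyContinuousMap ℕ ℝ` with the supremum norm) having value `c` in coordinate `k`
and `0` elsewhere. -/
noncomputable def c0single (k : ℕ) (c : ℝ) : ZeroAtInftyContinuousMap ℕ ℝ where
  toFun := fun j => if j = k then c else 0
  continuous_toFun := continuous_of_discreteTopology
  zero_at_infty' := by
    rw [Filter.cocompact_eq_cofinite]
    apply Filter.Tendsto.congr' _ tendsto_const_nhds
    rw [Filter.eventuallyEq_iff_exists_mem]
    exact ⟨{k}ᶜ, by simp [Filter.mem_cofinite],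
      fun j hj => by simp only [Set.mem_compl_iff, Set.mem_singleton_iff] at hj; simp [hj]⟩

/-- The vector `x_k ∈ E = (⊕_{n=1}^∞ c_0)_{ℓ_p}` whose `n`-th block, for `1 ≤ n ≤ k`,
equals `k^{-1/p} e_k`, and whose other blocks vanish.  (Blocks are indexed by `n : ℕ`,
with block `0` permanently zero, so that blocks `1, 2, 3, …` are the paper's blocks;
`x_0 = 0` is a dummy value.) -/
noncomputable def tandoriVec (p : ℝ) (k : ℕ) :
    lp (fun _ : ℕ => ZeroAtInftyContinuousMap ℕ ℝ) (ENNReal.ofReal p) :=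
  ∑ n ∈ Finset.Icc 1 k, lp.single (ENNReal.ofReal p) n (c0single k ((k : ℝ) ^ (-(1 / p))))

/-!
Put `M_m = max |a_j|` over `2^m ≤ j < 2^(m+1)` and `v = ∑ a_k x_k`. For `n ≥ 1`, the `n`-th block
of `v` is the sequence `a_j j^(-1/p)` cut down to `j ≥ n`, so `‖v‖^p = ∑_{n ≥ 1} s_n`, where
`s_n = sup_{j ≥ n} |a_j|^p / j` is decreasing. By Cauchy condensation, `∑ s_n` is comparable to
`∑ 2^m s_{2^m}`. The latter is comparable to `∑ M_m^p`: on the one hand `M_m^p ≤ 2^(m+1) s_{2^m}`,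
on the other `s_{2^m} ≤ ∑_{l ≥ m} M_l^p / 2^l`, and each `M_l^p / 2^l` is then counted with total
weight `∑_{m ≤ l} 2^m < 2^(l+1)`.
-/

open Finset
open scoped ZeroAtInfty

section Condensation

variable {K : Type*} [Field K] [LinearOrder K] [IsStrictOrderedRing K] {s b : ℕ → K}

lemma sum_range_le_four_mul_sum_Ico_of_le_condensed
    (hs : ∀ ⦃m n⦄, 1 < m → m ≤ n → s n ≤ s m) (h₁ : 0 ≤ s 1)
    (hb : ∀ m, b m ≤ 2 ^ (m + 1) * s (2 ^ m)) (N : ℕ) :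
    ∑ m ∈ range (N + 1), b m ≤ 4 * ∑ n ∈ Ico 1 (2 ^ N + 1), s n := by
  have hcond := sum_condensed_le hs N
  simp only [nsmul_eq_mul, Nat.cast_pow, Nat.cast_ofNat] at hcond
  calc ∑ m ∈ range (N + 1), b m
      ≤ ∑ m ∈ range (N + 1), 2 ^ (m + 1) * s (2 ^ m) := sum_le_sum fun m _ => hb m
    _ = 2 * ∑ m ∈ range (N + 1), 2 ^ m * s (2 ^ m) := by
      simp only [mul_sum, pow_succ', mul_assoc]
    _ ≤ 4 * (s 1 + ∑ n ∈ Ico 2 (2 ^ N + 1), s n) := by linarith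
    _ = 4 * ∑ n ∈ Ico 1 (2 ^ N + 1), s n := by
      rw [sum_eq_sum_Ico_succ_bot (Nat.lt_add_of_pos_left (by positivity))]

lemma sum_Ico_le_two_mul_sum_range_of_condensed_le
    (hs : ∀ ⦃m n⦄, 0 < m → m ≤ n → s n ≤ s m) (hb : ∀ m, 0 ≤ b m)
    {N : ℕ} (hsb : ∀ m < N, s (2 ^ m) ≤ ∑ l ∈ Ico m N, b l / 2 ^ l) :
    ∑ n ∈ Ico 1 (2 ^ N), s n ≤ 2 * ∑ l ∈ range N, b l := by
  have geom_le (l : ℕ) : ∑ m ∈ range (l + 1), (2 : K) ^ m ≤ 2 ^ (l + 1) := by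
    rw [geom_sum_eq (by norm_num)]
    norm_num
  calc ∑ n ∈ Ico 1 (2 ^ N), s n
      ≤ ∑ m ∈ range N, 2 ^ m * s (2 ^ m) := by
        simpa only [nsmul_eq_mul, Nat.cast_pow, Nat.cast_ofNat] using le_sum_condensed' hs N
    _ ≤ ∑ m ∈ range N, ∑ l ∈ Ico m N, 2 ^ m * (b l / 2 ^ l) := by
      simp only [← mul_sum]
      gcongr with m hm
      exact hsb m (mem_range.1 hm)
    _ = ∑ l ∈ range N, ∑ m ∈ range (l + 1), 2 ^ m * (b l / 2 ^ l) :=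
      sum_comm' fun m l => by simp only [mem_range, mem_Ico]; omega
    _ ≤ ∑ l ∈ range N, 2 ^ (l + 1) * (b l / 2 ^ l) := by
      simp only [← sum_mul]
      gcongr with l
      · exact div_nonneg (hb l) (by positivity)
      · exact geom_le l
    _ = 2 * ∑ l ∈ range N, b l := by
      rw [mul_sum]
      exact sum_congr rfl fun l _ => by field_simp; ring

end Condensation

lemma rpow_one_div_le_mul {x y c p : ℝ} (hp : 1 ≤ p) (hx : 0 ≤ x) (hy : 0 ≤ y) (hc : 1 ≤ c)
    (h : x ≤ c * y ^ p) : x ^ (1 / p) ≤ c * y := by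
  have hp₀ : 0 < p := zero_lt_one.trans_le hp
  rw [one_div, Real.rpow_inv_le_iff_of_pos hx (by positivity) hp₀,
    Real.mul_rpow (zero_le_one.trans hc) hy]
  exact h.trans (by gcongr; exact Real.self_le_rpow_of_one_le hc hp)

lemma rpow_neg_one_div_rpow {x p : ℝ} (hx : 0 ≤ x) (hp : p ≠ 0) : (x ^ (-(1 / p))) ^ p = x⁻¹ := by
  rw [← Real.rpow_mul hx, neg_mul, one_div_mul_cancel hp, Real.rpow_neg_one]

section ZeroAtInfty

variable {α β : Type*} [TopologicalSpace α]

lemma zeroAtInfty_sum_apply {ι : Type*} [AddCommMonoid β] [TopologicalSpace β] [ContinuousAdd β]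
    (s : Finset ι) (f : ι → C₀(α, β)) (x : α) : (∑ i ∈ s, f i) x = ∑ i ∈ s, f i x :=
  map_sum (⟨⟨fun g => g x, rfl⟩, fun _ _ => rfl⟩ : C₀(α, β) →+ β) f s

variable [SeminormedAddCommGroup β]

lemma zeroAtInfty_norm_apply_le (f : C₀(α, β)) (x : α) : ‖f x‖ ≤ ‖f‖ :=
  f.toBCF.norm_coe_le_norm x

lemma zeroAtInfty_norm_le_iff {f : C₀(α, β)} {C : ℝ} (hC : 0 ≤ C) :
    ‖f‖ ≤ C ↔ ∀ x, ‖f x‖ ≤ C :=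
  BoundedContinuousFunction.norm_le (f := f.toBCF) hC

lemma zeroAtInfty_norm_rpow_le_iff {f : C₀(α, β)} {p C : ℝ} (hp : 0 < p) (hC : 0 ≤ C) :
    ‖f‖ ^ p ≤ C ↔ ∀ x, ‖f x‖ ^ p ≤ C := by
  simp only [← Real.le_rpow_inv_iff_of_pos (norm_nonneg _) hC hp,
    zeroAtInfty_norm_le_iff (Real.rpow_nonneg hC _)]

end ZeroAtInfty

lemma c0single_apply (k : ℕ) (c : ℝ) (j : ℕ) : c0single k c j = if j = k then c else 0 := rfl

lemma norm_c0single (k : ℕ) (c : ℝ) : ‖c0single k c‖ = |c| := by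
  refine le_antisymm ((zeroAtInfty_norm_le_iff (abs_nonneg c)).2 fun j => ?_) ?_
  · rw [c0single_apply]
    split_ifs <;> simp
  · simpa [c0single_apply] using zeroAtInfty_norm_apply_le (c0single k c) k

section BlockMax

/-- The maximum of `|a j|` over the dyadic block `2 ^ m ≤ j < 2 ^ (m + 1)`, that is, the norm of
the `m`-th block of `a` in `ℓ_∞^{2 ^ m}`. -/
noncomputable def blockMax (a : ℕ → ℝ) (m : ℕ) : ℝ :=
  ⨆ j : {j : ℕ // 2 ^ m ≤ j ∧ j ≤ 2 ^ (m + 1) - 1}, |a j.1|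

variable (a : ℕ → ℝ)

lemma blockMax_nonneg (m : ℕ) : 0 ≤ blockMax a m :=
  Real.iSup_nonneg fun _ => abs_nonneg _

instance finite_dyadicBlock (m : ℕ) : Finite {j : ℕ // 2 ^ m ≤ j ∧ j ≤ 2 ^ (m + 1) - 1} :=
  (Set.finite_Icc (2 ^ m) (2 ^ (m + 1) - 1)).to_subtype

lemma exists_abs_eq_blockMax (m : ℕ) :
    ∃ j, 2 ^ m ≤ j ∧ j < 2 ^ (m + 1) ∧ |a j| = blockMax a m := by
  have : Nonempty {j : ℕ // 2 ^ m ≤ j ∧ j ≤ 2 ^ (m + 1) - 1} := ⟨2 ^ m, le_rfl, by grind⟩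
  obtain ⟨⟨j, hmj, hjm⟩, hj⟩ := exists_eq_ciSup_of_finite
    (f := fun j : {j : ℕ // 2 ^ m ≤ j ∧ j ≤ 2 ^ (m + 1) - 1} => |a j.1|)
  exact ⟨j, hmj, by grind, hj⟩

lemma abs_le_blockMax_log {j : ℕ} (hj : j ≠ 0) : |a j| ≤ blockMax a (Nat.log 2 j) :=
  Finite.le_ciSup
    (fun i : {i : ℕ // 2 ^ Nat.log 2 j ≤ i ∧ i ≤ 2 ^ (Nat.log 2 j + 1) - 1} => |a i.1|)
    ⟨j, Nat.pow_log_le_self 2 hj, Nat.le_sub_one_of_lt (Nat.lt_pow_succ_log_self one_lt_two j)⟩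

end BlockMax

lemma norm_tandoriVec {p : ℝ} (hp : 0 < p) {k : ℕ} (hk : k ≠ 0) : ‖tandoriVec p k‖ = 1 := by
  have hp' : (ENNReal.ofReal p).toReal = p := ENNReal.toReal_ofReal hp.le
  have hnorm : ‖tandoriVec p k‖ ^ p = 1 := by
    have h := lp.norm_sum_single (p := ENNReal.ofReal p) (by rwa [hp'])
      (fun _ : ℕ => c0single k ((k : ℝ) ^ (-(1 / p)))) (Icc 1 k)
    simp only [hp', norm_c0single, sum_const, Nat.card_Icc, Nat.add_sub_cancel, nsmul_eq_mul] at h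
    rwa [abs_of_nonneg (by positivity), rpow_neg_one_div_rpow k.cast_nonneg hp.ne',
      mul_inv_cancel₀ (Nat.cast_ne_zero.2 hk)] at h
  exact (Real.rpow_left_inj (lp.norm_nonneg' _) zero_le_one hp.ne').1 (by rwa [Real.one_rpow])

lemma tandoriVec_apply (p : ℝ) (k n j : ℕ) :
    tandoriVec p k n j = if j = k ∧ n ∈ Icc 1 k then (k : ℝ) ^ (-(1 / p)) else 0 := by
  rw [tandoriVec, lp.coeFn_sum, Finset.sum_apply]
  simp only [lp.coeFn_single, sum_pi_single, ite_and]
  split_ifs <;> simp_all [c0single_apply]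

/-- The vector `∑ k, a k • x_k` of `E`, for finitely supported coefficients `a`. -/
noncomputable def tandoriSum (p : ℝ) (a : ℕ →₀ ℝ) :
    lp (fun _ : ℕ => C₀(ℕ, ℝ)) (ENNReal.ofReal p) :=
  Finsupp.linearCombination ℝ (tandoriVec p) a

section TandoriSum

variable {p : ℝ} (a : ℕ →₀ ℝ)

lemma tandoriSum_apply (p : ℝ) (n j : ℕ) :
    tandoriSum p a n j = if n ∈ Icc 1 j then a j * (j : ℝ) ^ (-(1 / p)) else 0 := by
  have hsum : tandoriSum p a n j = ∑ k ∈ a.support, a k * tandoriVec p k n j := by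
    rw [tandoriSum, Finsupp.linearCombination_apply, Finsupp.sum, lp.coeFn_sum, Finset.sum_apply,
      zeroAtInfty_sum_apply]
    rfl
  simp only [hsum, tandoriVec_apply, ite_and, mul_ite, mul_zero, sum_ite_eq]
  split_ifs <;> simp_all

lemma mem_of_tandoriSum_apply_ne_zero {n j : ℕ} (h : tandoriSum p a n j ≠ 0) :
    j ∈ a.support ∧ n ∈ Icc 1 j := by
  rw [tandoriSum_apply, ite_ne_right_iff] at h
  exact ⟨Finsupp.mem_support_iff.2 (left_ne_zero_of_mul h.2), h.1⟩

lemma abs_tandoriSum_apply_rpow (hp : 0 < p) {n j : ℕ} (hn : n ∈ Icc 1 j) :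
    |tandoriSum p a n j| ^ p = |a j| ^ p / j := by
  rw [tandoriSum_apply, if_pos hn, abs_mul, Real.mul_rpow (abs_nonneg _) (abs_nonneg _),
    abs_of_nonneg (a := (j : ℝ) ^ _) (by positivity), rpow_neg_one_div_rpow j.cast_nonneg hp.ne',
    div_eq_mul_inv]

lemma norm_tandoriSum_apply_antitone {m n : ℕ} (hm : 0 < m) (hmn : m ≤ n) :
    ‖tandoriSum p a n‖ ≤ ‖tandoriSum p a m‖ := by
  refine (zeroAtInfty_norm_le_iff (norm_nonneg _)).2 fun j => ?_
  by_cases hj : tandoriSum p a n j = 0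
  · simp [hj]
  · have hn := (mem_of_tandoriSum_apply_ne_zero a hj).2
    have hnm : tandoriSum p a n j = tandoriSum p a m j := by
      rw [tandoriSum_apply, tandoriSum_apply, if_pos hn, if_pos (by grind)]
    exact hnm ▸ zeroAtInfty_norm_apply_le _ j

lemma blockMax_rpow_le (hp : 0 < p) (m : ℕ) :
    blockMax a m ^ p ≤ 2 ^ (m + 1) * ‖tandoriSum p a (2 ^ m)‖ ^ p := by
  obtain ⟨j, hmj, hjm, hj⟩ := exists_abs_eq_blockMax a m
  have hj₀ : 0 < j := (Nat.two_pow_pos m).trans_le hmj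
  calc blockMax a m ^ p
      = j * |tandoriSum p a (2 ^ m) j| ^ p := by
        rw [abs_tandoriSum_apply_rpow a hp (mem_Icc.2 ⟨Nat.one_le_two_pow, hmj⟩), ← hj]
        field_simp
    _ ≤ 2 ^ (m + 1) * ‖tandoriSum p a (2 ^ m)‖ ^ p := by
      gcongr
      · exact_mod_cast hjm.le
      · exact zeroAtInfty_norm_apply_le (tandoriSum p a (2 ^ m)) j

lemma norm_tandoriSum_apply_rpow_le (hp : 0 < p) {N : ℕ} (ha : a.support ⊆ range (2 ^ N)) (m : ℕ) :
    ‖tandoriSum p a (2 ^ m)‖ ^ p ≤ ∑ l ∈ Ico m N, blockMax a l ^ p / 2 ^ l := by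
  have term_nonneg (l : ℕ) : 0 ≤ blockMax a l ^ p / 2 ^ l := by
    have := blockMax_nonneg a l
    positivity
  have tail_nonneg : 0 ≤ ∑ l ∈ Ico m N, blockMax a l ^ p / 2 ^ l :=
    sum_nonneg fun l _ => term_nonneg l
  refine (zeroAtInfty_norm_rpow_le_iff hp tail_nonneg).2 fun j => ?_
  by_cases hj : tandoriSum p a (2 ^ m) j = 0
  · rwa [hj, norm_zero, Real.zero_rpow hp.ne']
  · obtain ⟨haj, hm⟩ := mem_of_tandoriSum_apply_ne_zero a hj
    have hmj : 2 ^ m ≤ j := (mem_Icc.1 hm).2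
    have hj₀ : j ≠ 0 := ((Nat.two_pow_pos m).trans_le hmj).ne'
    have hlog : Nat.log 2 j ∈ Ico m N := mem_Ico.2
      ⟨Nat.le_log_of_pow_le one_lt_two hmj, Nat.log_lt_of_lt_pow hj₀ (mem_range.1 (ha haj))⟩
    calc |tandoriSum p a (2 ^ m) j| ^ p
        = |a j| ^ p / j := abs_tandoriSum_apply_rpow a hp hm
      _ ≤ blockMax a (Nat.log 2 j) ^ p / 2 ^ Nat.log 2 j := by
        have := blockMax_nonneg a (Nat.log 2 j)
        gcongr
        · exact abs_le_blockMax_log a hj₀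
        · exact_mod_cast Nat.pow_log_le_self 2 hj₀
      _ ≤ ∑ l ∈ Ico m N, blockMax a l ^ p / 2 ^ l :=
        single_le_sum (fun l _ => term_nonneg l) hlog

lemma norm_tandoriSum_rpow_eq_sum (hp : 0 < p) {N : ℕ} (ha : a.support ⊆ range N) :
    ‖tandoriSum p a‖ ^ p = ∑ n ∈ Ico 1 N, ‖tandoriSum p a n‖ ^ p := by
  have hp' : (ENNReal.ofReal p).toReal = p := ENNReal.toReal_ofReal hp.le
  have hnorm := lp.norm_rpow_eq_tsum (by rwa [hp']) (tandoriSum p a)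
  rw [hp'] at hnorm
  rw [hnorm]
  refine tsum_eq_sum fun n hn => ?_
  have hzero : tandoriSum p a n = 0 := by
    ext j
    by_contra hj
    obtain ⟨haj, hnj⟩ := mem_of_tandoriSum_apply_ne_zero a hj
    grind
  rw [hzero, norm_zero, Real.zero_rpow hp.ne']

lemma sum_blockMax_rpow_le (hp : 0 < p) (N : ℕ) :
    ∑ m ∈ range N, blockMax a m ^ p ≤ 4 * ‖tandoriSum p a‖ ^ p := by
  have hp' : (ENNReal.ofReal p).toReal = p := ENNReal.toReal_ofReal hp.le
  have hpartial := lp.sum_rpow_le_norm_rpow (by rwa [hp']) (tandoriSum p a) (Ico 1 (2 ^ N + 1))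
  rw [hp'] at hpartial
  calc ∑ m ∈ range N, blockMax a m ^ p
      ≤ ∑ m ∈ range (N + 1), blockMax a m ^ p :=
      sum_le_sum_of_subset_of_nonneg (range_mono N.le_succ)
        fun m _ _ => Real.rpow_nonneg (blockMax_nonneg a m) p
    _ ≤ 4 * ∑ n ∈ Ico 1 (2 ^ N + 1), ‖tandoriSum p a n‖ ^ p :=
      sum_range_le_four_mul_sum_Ico_of_le_condensed
        (fun m n hm hmn => by
          gcongr; exact norm_tandoriSum_apply_antitone a (zero_lt_one.trans hm) hmn)
        (by positivity) (blockMax_rpow_le a hp) N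
    _ ≤ 4 * ‖tandoriSum p a‖ ^ p := by gcongr

lemma summable_blockMax_rpow (hp : 0 < p) : Summable fun m => blockMax a m ^ p :=
  summable_of_sum_range_le (fun m => Real.rpow_nonneg (blockMax_nonneg a m) p)
    (sum_blockMax_rpow_le a hp)

lemma tsum_blockMax_rpow_le (hp : 0 < p) :
    ∑' m, blockMax a m ^ p ≤ 4 * ‖tandoriSum p a‖ ^ p :=
  (summable_blockMax_rpow a hp).tsum_le_of_sum_range_le (sum_blockMax_rpow_le a hp)

lemma norm_tandoriSum_rpow_le (hp : 0 < p) :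
    ‖tandoriSum p a‖ ^ p ≤ 2 * ∑' m, blockMax a m ^ p := by
  obtain ⟨N, hN⟩ := a.support.exists_nat_subset_range
  have ha : a.support ⊆ range (2 ^ N) := hN.trans (range_mono Nat.lt_two_pow_self.le)
  have term_nonneg (m : ℕ) : 0 ≤ blockMax a m ^ p := Real.rpow_nonneg (blockMax_nonneg a m) p
  calc ‖tandoriSum p a‖ ^ p
      = ∑ n ∈ Ico 1 (2 ^ N), ‖tandoriSum p a n‖ ^ p := norm_tandoriSum_rpow_eq_sum a hp ha
    _ ≤ 2 * ∑ m ∈ range N, blockMax a m ^ p :=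
      sum_Ico_le_two_mul_sum_range_of_condensed_le
        (fun m n hm hmn => by gcongr; exact norm_tandoriSum_apply_antitone a hm hmn)
        term_nonneg fun m _ => norm_tandoriSum_apply_rpow_le a hp ha m
    _ ≤ 2 * ∑' m, blockMax a m ^ p := by
      gcongr
      exact (summable_blockMax_rpow a hp).sum_le_tsum _ fun m _ => term_nonneg m

lemma tsum_smul_tandoriVec [Fact (1 ≤ ENNReal.ofReal p)] :
    ∑' k, a k • tandoriVec p k = tandoriSum p a :=
  tsum_eq_sum fun k hk => by rw [Finsupp.notMem_support_iff.1 hk, zero_smul]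

end TandoriSum

/-- Let `1 ≤ p < ∞` and let `E = (⊕_{n=1}^∞ c_0)_{ℓ_p}`.  For `k ≥ 1` let
`x_k ∈ E` be the vector whose `n`-th block, for `1 ≤ n ≤ k`, equals `k^{-1/p} e_k`, and
whose other blocks vanish.  Then `‖x_k‖_E = 1` for every `k ≥ 1`, and there exists `C ≥ 1`
such that for every finitely supported real sequence `(a_j)_{j≥1}`:
`C⁻¹ (∑_{n=1}^∞ (max_{2^{n-1} ≤ j ≤ 2^n - 1} |a_j|)^p)^{1/p} ≤ ‖∑_k a_k x_k‖_E
  ≤ C (∑_{n=1}^∞ (max_{2^{n-1} ≤ j ≤ 2^n - 1} |a_j|)^p)^{1/p}`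
(the paper's block `2^{n-1} ≤ j ≤ 2^n - 1`, `n = 1, 2, …`, is written below as
`2^n ≤ j ≤ 2^(n+1) - 1` with `n : ℕ` running over `0, 1, 2, …`).  That is, `(x_k)_{k≥1}`
is a normalized sequence equivalent to the canonical basis of
`(⊕_{n=1}^∞ ℓ_∞^{2^{n-1}})_{ℓ_p}`. -/
theorem stmt_8 (p : ℝ) (hp : 1 ≤ p) [Fact (1 ≤ ENNReal.ofReal p)] :
    (∀ k : ℕ, 1 ≤ k → ‖tandoriVec p k‖ = 1) ∧
    ∃ C : ℝ, 1 ≤ C ∧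
      ∀ a : ℕ → ℝ, (Function.support a).Finite →
        C⁻¹ * (∑' n : ℕ, (⨆ j : {j : ℕ // 2 ^ n ≤ j ∧ j ≤ 2 ^ (n + 1) - 1},
            |a j.1|) ^ p) ^ (1 / p) ≤ ‖∑' k : ℕ, a k • tandoriVec p k‖ ∧
        ‖∑' k : ℕ, a k • tandoriVec p k‖ ≤
          C * (∑' n : ℕ, (⨆ j : {j : ℕ // 2 ^ n ≤ j ∧ j ≤ 2 ^ (n + 1) - 1},
            |a j.1|) ^ p) ^ (1 / p) := by
  have hp₀ : 0 < p := zero_lt_one.trans_le hp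
  refine ⟨fun k hk => norm_tandoriVec hp₀ (Nat.one_le_iff_ne_zero.1 hk), 4, by norm_num,
    fun a ha => ?_⟩
  lift a to ℕ →₀ ℝ using ha
  rw [tsum_smul_tandoriVec]
  change 4⁻¹ * (∑' m, blockMax a m ^ p) ^ (1 / p) ≤ _ ∧
    _ ≤ 4 * (∑' m, blockMax a m ^ p) ^ (1 / p)
  set S := ∑' m, blockMax a m ^ p
  have hS : 0 ≤ S := tsum_nonneg fun m => Real.rpow_nonneg (blockMax_nonneg a m) p
  have lower : S ^ (1 / p) ≤ 4 * ‖tandoriSum p a‖ :=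
    rpow_one_div_le_mul hp hS (norm_nonneg _) (by norm_num) (tsum_blockMax_rpow_le a hp₀)
  have upper : (‖tandoriSum p a‖ ^ p) ^ (1 / p) ≤ 4 * S ^ (1 / p) := by
    refine rpow_one_div_le_mul hp (by positivity) (by positivity) (by norm_num) ?_
    rw [one_div, Real.rpow_inv_rpow hS hp₀.ne']
    linarith [norm_tandoriSum_rpow_le a hp₀]
  rw [one_div, Real.rpow_rpow_inv (norm_nonneg _) hp₀.ne', ← one_div] at upper
  exact ⟨(inv_mul_le_iff₀ (by norm_num)).2 lower, upper⟩
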